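/- Let (L,·) and (L',·) be left quasigroups, (M,μ) and (M',μ') ternary systems satisfying conditions (M1) and (M2), and π : L → M, π' : L' → M' bijections. Let f : L → L' satisfy f(u·v) = f(u)·f(v) for all u,v ∈ L, and suppose π' ∘ f ∘ π⁻¹ : M → M' is a homomorphism of ternary systems, i.e. (π'∘f∘π⁻¹)(μ(a,b,c)) = μ'((π'∘f∘π⁻¹)(a), (π'∘f∘π⁻¹)(b), (π'∘f∘π⁻¹)(c)) for all a,b,c ∈ M. Then R^{(L',M',π')}(f(λ)) ∘ (f×f) = (f×f) ∘ R^{(L,M,π)}(λ) for all λ ∈ L. -/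

import Mathlib

/-- Condition (M1) for a ternary operation. -/
def CondM1 {M : Type*} (μ : M → M → M → M) : Prop :=
  ∀ a b c d : M, μ a (μ a b c) (μ (μ a b c) c d) = μ a b (μ b c d)

/-- Condition (M2) for a ternary operation. -/
def CondM2 {M : Type*} (μ : M → M → M → M) : Prop :=
  ∀ a b c d : M, μ (μ a b c) c d = μ (μ a b (μ b c d)) (μ b c d) d

/-- ξ_λ(u)(v) = λ\π⁻¹(μ(π(λ), π(λ·u), π((λ·u)·v))). -/
def xiMap {L M : Type*} (mul ld : L → L → L) (μ : M → M → M → M) (π : L ≃ M)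
    (lam u v : L) : L :=
  ld lam (π.symm (μ (π lam) (π (mul lam u)) (π (mul (mul lam u) v))))

/-- R^{(L,M,π)}(λ)(u,v) = ((λ·ξ_λ(u)(v))\((λ·u)·v), ξ_λ(u)(v)). -/
def Rmap {L M : Type*} (mul ld : L → L → L) (μ : M → M → M → M) (π : L ≃ M)
    (lam : L) (p : L × L) : L × L :=
  (ld (mul lam (xiMap mul ld μ π lam p.1 p.2)) (mul (mul lam p.1) p.2),
    xiMap mul ld μ π lam p.1 p.2)

/-!
`R(λ)` is built from `·`, `\` and the ternary operation of `M` read on `L` through `π`. The map `f`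
preserves `·` and the transported ternary operation by hypothesis, and it preserves `\` because
`u\_` inverts `u·_`; hence it preserves `R`.
-/

/-- Homomorphisms of ternary systems. -/
def IsTernaryHom {M M' : Type*} (μ : M → M → M → M) (μ' : M' → M' → M' → M') (φ : M → M') :
    Prop :=
  ∀ a b c : M, φ (μ a b c) = μ' (φ a) (φ b) (φ c)

/-- The ternary operation on `L` obtained from `μ` by transport of structure along `π`, through
which `μ` and `π` enter `xiMap`. -/
def transportTernary {L M : Type*} (μ : M → M → M → M) (π : L ≃ M) (u v w : L) : L :=
  π.symm (μ (π u) (π v) (π w))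

section

variable {L L' M M' : Type*} {mul ld : L → L → L} {mul' ld' : L' → L' → L'}
  {μ : M → M → M → M} {μ' : M' → M' → M' → M'} {π : L ≃ M} {π' : L' ≃ M'} {f : L → L'}

theorem isTernaryHom_transportTernary_iff :
    IsTernaryHom (transportTernary μ π) (transportTernary μ' π') f ↔
      IsTernaryHom μ μ' (π' ∘ f ∘ π.symm) := by
  simp [IsTernaryHom, transportTernary, π.symm.surjective.forall, Equiv.eq_symm_apply]

theorem semiconj₂_leftDiv (hmul : ∀ u, Function.RightInverse (ld u) (mul u))
    (hld' : ∀ u, Function.LeftInverse (ld' u) (mul' u)) (hf : Function.Semiconj₂ f mul mul') :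
    Function.Semiconj₂ f ld ld' := fun u =>
  Function.Semiconj.inverses_right (hf u) (hmul u) (hld' (f u))

theorem xiMap_eq_transportTernary (lam u v : L) :
    xiMap mul ld μ π lam u v =
      ld lam (transportTernary μ π lam (mul lam u) (mul (mul lam u) v)) :=
  rfl

theorem map_xiMap (hf : Function.Semiconj₂ f mul mul') (hfld : Function.Semiconj₂ f ld ld')
    (hhom : IsTernaryHom μ μ' (π' ∘ f ∘ π.symm)) (lam u v : L) :
    f (xiMap mul ld μ π lam u v) = xiMap mul' ld' μ' π' (f lam) (f u) (f v) := by
  have htransport := isTernaryHom_transportTernary_iff.mpr hhom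
  simp only [xiMap_eq_transportTernary, hfld.eq, htransport _ _ _, hf.eq]

theorem semiconj_Rmap (hf : Function.Semiconj₂ f mul mul') (hfld : Function.Semiconj₂ f ld ld')
    (hhom : IsTernaryHom μ μ' (π' ∘ f ∘ π.symm)) (lam : L) :
    Function.Semiconj (Prod.map f f) (Rmap mul ld μ π lam) (Rmap mul' ld' μ' π' (f lam)) := by
  rintro ⟨u, v⟩
  simp only [Rmap, Prod.map_apply, hfld.eq, hf.eq, map_xiMap hf hfld hhom]

theorem Rmap_intertwines_general (hmul : ∀ u, Function.RightInverse (ld u) (mul u))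
    (hld' : ∀ u, Function.LeftInverse (ld' u) (mul' u)) (hf : Function.Semiconj₂ f mul mul')
    (hhom : IsTernaryHom μ μ' (π' ∘ f ∘ π.symm)) (lam : L) :
    Rmap mul' ld' μ' π' (f lam) ∘ Prod.map f f = Prod.map f f ∘ Rmap mul ld μ π lam :=
  (semiconj_Rmap hf (semiconj₂_leftDiv hmul hld' hf) hhom lam).comp_eq.symm

end

/-- if f : L → L' is multiplicative and π' ∘ f ∘ π⁻¹ is a homomorphism
of ternary systems, then R^{(L',M',π')}(f(λ)) ∘ (f×f) = (f×f) ∘ R^{(L,M,π)}(λ). -/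
theorem Rmap_intertwines {L L' M M' : Type*} [Nonempty L] [Nonempty L']
    (mul ld : L → L → L)
    (hmul : ∀ u w : L, mul u (ld u w) = w)
    (hld : ∀ u v : L, ld u (mul u v) = v)
    (mul' ld' : L' → L' → L')
    (hmul' : ∀ u w : L', mul' u (ld' u w) = w)
    (hld' : ∀ u v : L', ld' u (mul' u v) = v)
    (μ : M → M → M → M) (μ' : M' → M' → M' → M')
    (hM1 : CondM1 μ) (hM2 : CondM2 μ) (hM1' : CondM1 μ') (hM2' : CondM2 μ')
    (π : L ≃ M) (π' : L' ≃ M')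
    (f : L → L')
    (hf : ∀ u v : L, f (mul u v) = mul' (f u) (f v))
    (hhom : ∀ a b c : M,
      π' (f (π.symm (μ a b c)))
        = μ' (π' (f (π.symm a))) (π' (f (π.symm b))) (π' (f (π.symm c)))) :
    ∀ lam : L,
      Rmap mul' ld' μ' π' (f lam) ∘ Prod.map f f
        = Prod.map f f ∘ Rmap mul ld μ π lam :=
  Rmap_intertwines_general hmul hld' hf hhom
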